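/- For each integer n ≥ 2 define J_n(r) = ∫₀^r sin^{n−1}(s/2) ds and V_n = (2/J_n(π)²) · ∫₀^π (J_n(u)²/sin^{n−1}(u/2)) · ( ∫_u^π (J_n(π) − J_n(s))² / sin^{n−1}(s/2) ds ) du. Then (n−1)²·V_n converges, as n → ∞, to 4N, where N = (2⁴/π) · ∫₀^{∞} e^{h₄²/2} · ( ∫₀^{h₄} e^{−x²/2} dx )² · ( ∫_{h₄}^{∞} e^{h₃²/2} · ( ∫_{h₃}^{∞} e^{−h₁²/2} dh₁ )² dh₃ ) dh₄, and this integral N is finite. -/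

import Mathlib

open Real Filter MeasureTheory Set

noncomputable def Jn (n : ℕ) (r : ℝ) : ℝ :=
  ∫ s in (0:ℝ)..r, Real.sin (s/2) ^ (n - 1)

noncomputable def VRP (n : ℕ) : ℝ :=
  (2 / (Jn n π)^2) *
    ∫ u in (0:ℝ)..π, ((Jn n u)^2 / Real.sin (u/2) ^ (n - 1)) *
      ∫ s in u..π, (Jn n π - Jn n s)^2 / Real.sin (s/2) ^ (n - 1)

noncomputable def NRP : ℝ :=
  (2^4 / π) * ∫ h₄ in Ioi (0:ℝ),
    Real.exp (h₄^2/2) * (∫ x in (0:ℝ)..h₄, Real.exp (-x^2/2))^2 *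
      ∫ h₃ in Ioi h₄,
        Real.exp (h₃^2/2) * (∫ h₁ in Ioi h₃, Real.exp (-h₁^2/2))^2


namespace RPV

noncomputable def g (x : ℝ) : ℝ := Real.exp (-x^2/2)

lemma g_pos (x : ℝ) : 0 < g x := Real.exp_pos _

lemma g_le_one (x : ℝ) : g x ≤ 1 := by
  unfold g; rw [Real.exp_le_one_iff]; nlinarith [sq_nonneg x]

lemma g_cont : Continuous g := by unfold g; fun_prop

lemma g_eq : g = fun x => Real.exp (-(1/2) * x^2) := by
  funext x; unfold g; congr 1; ring

lemma g_int : Integrable g := by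
  rw [g_eq]; exact integrable_exp_neg_mul_sq (by norm_num)

lemma exp_eq (x : ℝ) : Real.exp (x^2/2) = (g x)⁻¹ := by
  unfold g; rw [← Real.exp_neg]; congr 1; ring

noncomputable def A (k : ℝ) : ℝ := ∫ x in (0:ℝ)..k, g x
noncomputable def B (h : ℝ) : ℝ := ∫ x in Ioi h, g x

lemma A_add_B (h : ℝ) : A h + B h = B 0 :=
  intervalIntegral.integral_interval_add_Ioi g_int.integrableOn g_int.integrableOn

lemma B_zero : B 0 = √(π / (1/2)) / 2 := by
  unfold B; rw [g_eq]; exact integral_gaussian_Ioi _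

lemma A_nonneg {k : ℝ} (hk : 0 ≤ k) : 0 ≤ A k :=
  intervalIntegral.integral_nonneg hk (fun x _ => (g_pos x).le)

lemma B_nonneg (h : ℝ) : 0 ≤ B h :=
  setIntegral_nonneg measurableSet_Ioi (fun x _ => (g_pos x).le)

lemma A_le_self {k : ℝ} (hk : 0 ≤ k) : A k ≤ k := by
  have := intervalIntegral.integral_mono_on (μ := volume) (f := g) (g := fun _ => (1:ℝ)) hk
    (g_cont.intervalIntegrable _ _) intervalIntegrable_const (fun x _ => g_le_one x)
  simpa [A] using this

lemma A_le_two (k : ℝ) : A k ≤ 2 := by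
  have h1 := A_add_B k
  have h2 := B_nonneg k
  have h3 : √(π / (1/2)) ≤ 4 := by
    rw [Real.sqrt_le_left (by norm_num)]
    nlinarith [Real.pi_le_four]
  rw [B_zero] at h1
  linarith

lemma B_le {h : ℝ} (hh : 0 < h) : B h ≤ g h / h := by
  have h1 : ∫ x in Ioi h, Real.exp (h^2/2) * Real.exp (-h * x) = g h / h := by
    rw [integral_const_mul, integral_exp_mul_Ioi (by linarith)]
    unfold g
    rw [neg_div_neg_eq, ← mul_div_assoc, ← Real.exp_add]
    congr 2; ring
  rw [← h1]
  unfold B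
  apply setIntegral_mono_on g_int.integrableOn
  · exact (integrableOn_exp_mul_Ioi (by linarith) h).const_mul _
  · exact measurableSet_Ioi
  · intro x _
    unfold g
    rw [← Real.exp_add, Real.exp_le_exp]
    nlinarith [sq_nonneg (x - h)]

lemma A_cont : Continuous A :=
  intervalIntegral.continuous_primitive (fun _ _ => g_cont.intervalIntegrable _ _) 0

lemma B_cont : Continuous B := by
  have : B = fun h => B 0 - A h := by funext h; linarith [A_add_B h]
  rw [this]; exact continuous_const.sub A_cont

def D : Set (ℝ × ℝ) := {p : ℝ × ℝ | 0 ≤ p.1 ∧ p.1 ≤ p.2}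

lemma D_meas : MeasurableSet D :=
  (measurableSet_le measurable_const measurable_fst).inter
    (measurableSet_le measurable_fst measurable_snd)

noncomputable def G (p : ℝ × ℝ) : ℝ := (A p.1)^2 / g p.1 * ((B p.2)^2 / g p.2)

lemma G_cont : Continuous G := by
  unfold G
  have := A_cont; have := B_cont; have := g_cont
  refine Continuous.mul (Continuous.div (by fun_prop) (by fun_prop) ?_)
    (Continuous.div (by fun_prop) (by fun_prop) ?_)
  all_goals intro p; exact (g_pos _).ne'

lemma G_nonneg (p : ℝ × ℝ) : 0 ≤ G p := by
  have := g_pos p.1; have := g_pos p.2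
  unfold G; positivity

lemma conv_int : Integrable (fun p : ℝ × ℝ => 5 * ((1 + p.1^2)⁻¹ * g (p.2 - p.1))) := by
  have h := Integrable.convolution_integrand (ContinuousLinearMap.mul ℝ ℝ)
    integrable_inv_one_add_sq (μ := volume) g_int
  exact h.swap.const_mul 5

lemma G_le {p : ℝ × ℝ} (hp : p ∈ D) : G p ≤ 5 * ((1 + p.1^2)⁻¹ * g (p.2 - p.1)) := by
  obtain ⟨k, h⟩ := p
  obtain ⟨h0, h1⟩ := hp
  simp only at h0 h1 ⊢
  rcases h0.eq_or_lt with h0 | h0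
  · subst h0
    have := g_pos (h - 0)
    simp only [G, A, intervalIntegral.integral_same]
    simp
    simpa using this.le
  have hh : 0 < h := h0.trans_le h1
  have hA0 := A_nonneg h0.le
  have hA1 := A_le_self h0.le
  have hA2 := A_le_two k
  have hA : (A k)^2 ≤ 5 * (1 + k^2)⁻¹ * k^2 := by
    rw [← div_eq_mul_inv, div_mul_eq_mul_div, le_div_iff₀ (by positivity)]
    have e1 : A k ^2 ≤ k^2 := pow_le_pow_left₀ hA0 hA1 2
    have e2 : A k ^2 ≤ 2^2 := pow_le_pow_left₀ hA0 hA2 2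
    nlinarith [sq_nonneg k]
  have hB : (B h)^2 ≤ (g h / k)^2 := by
    apply pow_le_pow_left₀ (B_nonneg h)
    exact (B_le hh).trans (div_le_div_of_nonneg_left (g_pos h).le h0 h1)
  have hg : g h / g k ≤ g (h - k) := by
    unfold g
    rw [← Real.exp_sub, Real.exp_le_exp]
    nlinarith [mul_nonneg h0.le (sub_nonneg.2 h1)]
  have gk := g_pos k
  have gh := g_pos h
  calc G (k, h) = (A k)^2 / g k * ((B h)^2 / g h) := rfl
    _ ≤ (5 * (1 + k^2)⁻¹ * k^2) / g k * ((g h / k)^2 / g h) := by gcongr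
    _ = 5 * (1 + k^2)⁻¹ * (g h / g k) := by field_simp
    _ ≤ 5 * (1 + k^2)⁻¹ * g (h - k) := by gcongr
    _ = _ := by ring

lemma G_int : IntegrableOn G D := by
  refine Integrable.mono' (conv_int.integrableOn (s := D)) G_cont.aestronglyMeasurable ?_
  filter_upwards [ae_restrict_mem D_meas] with p hp
  rw [Real.norm_of_nonneg (G_nonneg p)]
  exact G_le hp

lemma fub1 (a b : ℝ → ℝ) (h : IntegrableOn (fun p : ℝ × ℝ => a p.1 * b p.2) D) :
    ∫ p in D, a p.1 * b p.2 = ∫ k in Ioi (0:ℝ), a k * ∫ x in Ioi k, b x := by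
  rw [← integral_indicator D_meas, Measure.volume_eq_prod, integral_prod _
    (by rw [← Measure.volume_eq_prod]; exact (integrable_indicator_iff D_meas).2 h),
    ← integral_Ici_eq_integral_Ioi, ← integral_indicator measurableSet_Ici]
  congr 1; funext k
  by_cases hk : 0 ≤ k
  · rw [indicator_of_mem (by exact hk), ← integral_Ici_eq_integral_Ioi,
      ← integral_indicator measurableSet_Ici, ← integral_const_mul]
    congr 1; funext x
    by_cases hx : k ≤ x <;> simp [indicator, D, hk, hx]
  · simp [indicator, D, hk]

lemma fub2 (a b : ℝ → ℝ) (h : IntegrableOn (fun p : ℝ × ℝ => a p.1 * b p.2) D) :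
    ∫ p in D, a p.1 * b p.2 = ∫ x in Ioi (0:ℝ), b x * ∫ k in (0:ℝ)..x, a k := by
  rw [← integral_indicator D_meas, Measure.volume_eq_prod, integral_prod_symm _
    (by rw [← Measure.volume_eq_prod]; exact (integrable_indicator_iff D_meas).2 h),
    ← integral_Ici_eq_integral_Ioi, ← integral_indicator measurableSet_Ici]
  congr 1; funext x
  by_cases hx : 0 ≤ x
  · rw [indicator_of_mem (by exact hx), intervalIntegral.integral_of_le hx,
      ← integral_Icc_eq_integral_Ioc,
      ← integral_indicator measurableSet_Icc, ← integral_const_mul]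
    congr 1; funext k
    by_cases h1 : 0 ≤ k <;> by_cases h2 : k ≤ x <;> simp [indicator, D, h1, h2, mul_comm]
  · rw [indicator_of_notMem (by exact hx)]
    refine integral_eq_zero_of_ae (Eventually.of_forall fun k => ?_)
    simp only [Pi.zero_apply]
    rw [indicator_of_notMem]
    rintro ⟨h1, h2⟩
    exact hx (h1.trans h2)

lemma NRP_eq : NRP = (2^4/π) * ∫ p in D, G p := by
  unfold NRP
  congr 1
  have := fub1 (fun k => (A k)^2 / g k) (fun x => (B x)^2 / g x) G_int
  refine Eq.trans ?_ this.symm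
  congr 1; funext k
  rw [exp_eq, div_eq_inv_mul]
  congr 2; funext x
  rw [exp_eq, div_eq_inv_mul]
  rfl

noncomputable def Lm (m : ℕ) : ℝ := √m * (π/2)

noncomputable def C (m : ℕ) (x : ℝ) : ℝ :=
  (Ico 0 (Lm m)).indicator (fun x => Real.cos (x / √m) ^ m) x

lemma C_of_mem {m : ℕ} {x : ℝ} (h0 : 0 ≤ x) (h1 : x < Lm m) : C m x = Real.cos (x / √m) ^ m :=
  indicator_of_mem (s := Ico 0 (Lm m)) ⟨h0, h1⟩ _

lemma C_of_ge {m : ℕ} {x : ℝ} (h1 : Lm m ≤ x) : C m x = 0 :=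
  indicator_of_notMem (s := Ico 0 (Lm m)) (fun h => absurd h.2 (not_lt.2 h1)) _

lemma C_of_neg {m : ℕ} {x : ℝ} (h1 : x < 0) : C m x = 0 :=
  indicator_of_notMem (s := Ico 0 (Lm m)) (fun h => absurd h.1 (not_le.2 h1)) _

lemma C_meas (m : ℕ) : Measurable (C m) := by
  unfold C
  exact Measurable.indicator (by fun_prop) measurableSet_Ico

lemma m_pos_of_lt {m : ℕ} {x : ℝ} (h0 : 0 ≤ x) (h1 : x < Lm m) : (0:ℝ) < √m := by
  have : 0 < Lm m := h0.trans_lt h1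
  unfold Lm at this
  exact pos_of_mul_pos_left this (by positivity)

lemma div_lt_of {m : ℕ} {x : ℝ} (h0 : 0 ≤ x) (h1 : x < Lm m) : x / √m < π/2 := by
  rw [div_lt_iff₀ (m_pos_of_lt h0 h1), mul_comm]; exact h1

lemma C_pos {m : ℕ} {x : ℝ} (h0 : 0 ≤ x) (h1 : x < Lm m) : 0 < C m x := by
  rw [C_of_mem h0 h1]
  apply pow_pos
  apply Real.cos_pos_of_mem_Ioo
  have := div_lt_of h0 h1
  have : 0 ≤ x / √m := by positivity
  constructor <;> linarith [Real.pi_pos]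

lemma C_nonneg (m : ℕ) (x : ℝ) : 0 ≤ C m x := by
  by_cases h0 : 0 ≤ x
  · by_cases h1 : x < Lm m
    · exact (C_pos h0 h1).le
    · exact (C_of_ge (not_lt.1 h1)).ge
  · exact (C_of_neg (not_le.1 h0)).ge

lemma cos_anti : AntitoneOn (fun x : ℝ => Real.cos x * Real.exp (x^2/2)) (Ico 0 (π/2)) := by
  apply antitoneOn_of_deriv_nonpos (convex_Ico _ _)
  · fun_prop
  · fun_prop
  · intro x hx
    rw [interior_Ico] at hx
    have hd : HasDerivAt (fun x : ℝ => Real.cos x * Real.exp (x^2/2))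
        (-Real.sin x * Real.exp (x^2/2) + Real.cos x * (Real.exp (x^2/2) * x)) x := by
      refine (Real.hasDerivAt_cos x).mul (HasDerivAt.exp ?_)
      have := ((hasDerivAt_id' x).pow 2).div_const 2
      refine this.congr_deriv ?_
      norm_num
    rw [hd.deriv]
    have hc : 0 < Real.cos x := Real.cos_pos_of_mem_Ioo ⟨by linarith [hx.1, Real.pi_pos], hx.2⟩
    have ht := Real.lt_tan hx.1 hx.2
    rw [Real.tan_eq_sin_div_cos, lt_div_iff₀ hc] at ht
    have := Real.exp_pos (x^2/2)
    nlinarith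

lemma exp_pow_eq {m : ℕ} {x : ℝ} (hm : (0:ℝ) < √m) :
    Real.exp ((x/√m)^2/2) ^ m = (g x)⁻¹ := by
  rw [← exp_eq, ← Real.exp_nat_mul]
  congr 1
  rw [div_pow, Real.sq_sqrt (by positivity)]
  have : (0:ℝ) < m := Real.sqrt_pos.1 hm
  field_simp

lemma C_mono {m : ℕ} {k h : ℝ} (h0 : 0 ≤ k) (h1 : k ≤ h) : C m h / g h ≤ C m k / g k := by
  by_cases h2 : h < Lm m
  · have hm := m_pos_of_lt (h0.trans h1) h2
    rw [C_of_mem (h0.trans h1) h2, C_of_mem h0 (h1.trans_lt h2), div_eq_mul_inv _ (g h),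
      div_eq_mul_inv _ (g k),
      ← exp_pow_eq hm, ← exp_pow_eq hm, ← mul_pow, ← mul_pow]
    have hd := div_lt_of (h0.trans h1) h2
    have hkh : k / √m ≤ h / √m := by gcongr
    have hk0 : 0 ≤ k / √m := by positivity
    apply pow_le_pow_left₀
    · apply mul_nonneg _ (Real.exp_pos _).le
      apply Real.cos_nonneg_of_mem_Icc
      constructor <;> linarith [Real.pi_pos]
    · exact cos_anti ⟨hk0, hkh.trans_lt hd⟩ ⟨hk0.trans hkh, hd⟩ hkh
  · rw [C_of_ge (not_lt.1 h2), zero_div]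
    exact div_nonneg (C_nonneg _ _) (g_pos _).le

lemma C_le (m : ℕ) (x : ℝ) : C m x ≤ g x := by
  by_cases h0 : 0 ≤ x
  · have h1 := C_mono (m := m) le_rfl h0
    have h2 : C m 0 / g 0 ≤ 1 := by
      have : g 0 = 1 := by simp [g]
      rw [this, div_one]
      unfold C indicator
      split_ifs <;> simp
    exact (div_le_one (g_pos x)).1 (h1.trans h2)
  · rw [C_of_neg (not_le.1 h0)]; exact (g_pos x).le

lemma C_int (m : ℕ) : Integrable (C m) := by
  refine g_int.mono' (C_meas m).aestronglyMeasurable (Eventually.of_forall fun x => ?_)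
  rw [Real.norm_of_nonneg (C_nonneg m x)]; exact C_le m x

lemma C_lim {x : ℝ} (hx : 0 ≤ x) : Tendsto (fun m => C m x) atTop (nhds (g x)) := by
  have hs : Tendsto (fun m : ℕ => √(m:ℝ)) atTop atTop :=
    Real.tendsto_sqrt_atTop.comp tendsto_natCast_atTop_atTop
  have key : Tendsto (fun m : ℕ => (m:ℝ) * (Real.cos (x / √m) - 1)) atTop (nhds (-x^2/2)) := by
    have h1 : Tendsto (fun m : ℕ => x^4 * (5/96) / (m:ℝ)) atTop (nhds 0) :=
      tendsto_const_nhds.div_atTop tendsto_natCast_atTop_atTop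
    rw [tendsto_iff_dist_tendsto_zero]
    refine squeeze_zero' (Eventually.of_forall fun _ => dist_nonneg) ?_ h1
    filter_upwards [hs.eventually_ge_atTop (x+1)] with m hm
    have hsp : 0 < √(m:ℝ) := by linarith
    have hmp : (0:ℝ) < m := Real.sqrt_pos.1 hsp
    have hle : |x / √m| ≤ 1 := by
      rw [abs_of_nonneg (by positivity), div_le_one hsp]; linarith
    have hb := Real.cos_bound hle
    have hsq : (x / √(m:ℝ))^2 = x^2 / m := by rw [div_pow, Real.sq_sqrt hmp.le]
    have h4 : |x / √(m:ℝ)|^4 = x^4 / m^2 := by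
      rw [show (4:ℕ) = 2 * 2 from rfl, pow_mul, sq_abs, hsq]; ring
    rw [h4, hsq] at hb
    rw [Real.dist_eq]
    have e : (m:ℝ) * (Real.cos (x / √m) - 1) - -x^2/2
        = m * (Real.cos (x / √m) - (1 - x^2 / m / 2)) := by field_simp; ring
    rw [e, abs_mul, abs_of_pos hmp]
    calc _ ≤ (m:ℝ) * (x^4 / m^2 * (5/96)) := by gcongr
      _ = _ := by field_simp
  have h2 := Real.tendsto_one_add_pow_exp_of_tendsto key
  refine h2.congr' ?_
  have hL : Tendsto Lm atTop atTop := by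
    unfold Lm; exact hs.atTop_mul_const (by positivity)
  filter_upwards [hL.eventually_gt_atTop x] with m hm
  rw [C_of_mem hx hm]; simp

noncomputable def Am (m : ℕ) (k : ℝ) : ℝ := ∫ x in (0:ℝ)..k, C m x
noncomputable def Bm (m : ℕ) (h : ℝ) : ℝ := ∫ x in Ioi h, C m x

lemma Am_add_Bm (m : ℕ) (h : ℝ) : Am m h + Bm m h = Bm m 0 :=
  intervalIntegral.integral_interval_add_Ioi (C_int m).integrableOn (C_int m).integrableOn

lemma Am_cont (m : ℕ) : Continuous (Am m) :=
  intervalIntegral.continuous_primitive (fun _ _ => (C_int m).intervalIntegrable) 0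

lemma Bm_cont (m : ℕ) : Continuous (Bm m) := by
  have : Bm m = fun h => Bm m 0 - Am m h := by funext h; linarith [Am_add_Bm m h]
  rw [this]; exact continuous_const.sub (Am_cont m)

lemma Am_nonneg {m : ℕ} {k : ℝ} (hk : 0 ≤ k) : 0 ≤ Am m k :=
  intervalIntegral.integral_nonneg hk (fun x _ => C_nonneg m x)

lemma Bm_nonneg (m : ℕ) (h : ℝ) : 0 ≤ Bm m h :=
  setIntegral_nonneg measurableSet_Ioi (fun x _ => C_nonneg m x)

lemma Am_le {m : ℕ} {k : ℝ} (hk : 0 ≤ k) : Am m k ≤ A k :=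
  intervalIntegral.integral_mono_on hk (C_int m).intervalIntegrable
    (g_cont.intervalIntegrable _ _) (fun x _ => C_le m x)

lemma Bm_le {m : ℕ} {h : ℝ} (hh : 0 ≤ h) : Bm m h ≤ C m h / g h * B h := by
  unfold Bm B
  rw [← integral_const_mul]
  apply setIntegral_mono_on (C_int m).integrableOn (g_int.integrableOn.const_mul _)
    measurableSet_Ioi
  intro x hx
  have := C_mono (m := m) hh (le_of_lt hx)
  rwa [div_le_iff₀ (g_pos x)] at this

lemma Bm_lim {h : ℝ} (hh : 0 ≤ h) : Tendsto (fun m => Bm m h) atTop (nhds (B h)) := by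
  apply tendsto_integral_of_dominated_convergence g
  · exact fun m => (C_meas m).aestronglyMeasurable
  · exact g_int.integrableOn
  · intro m
    refine Eventually.of_forall fun x => ?_
    rw [Real.norm_of_nonneg (C_nonneg m x)]; exact C_le m x
  · filter_upwards [ae_restrict_mem measurableSet_Ioi] with x hx
    exact C_lim (hh.trans (le_of_lt hx))

lemma Am_lim {k : ℝ} (hk : 0 ≤ k) : Tendsto (fun m => Am m k) atTop (nhds (A k)) := by
  have : A k = B 0 - B k := by linarith [A_add_B k]
  rw [this]
  refine ((Bm_lim le_rfl).sub (Bm_lim hk)).congr fun m => ?_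
  linarith [Am_add_Bm m k]

noncomputable def Gm (m : ℕ) (p : ℝ × ℝ) : ℝ :=
  (Am m p.1)^2 / C m p.1 * ((Bm m p.2)^2 / C m p.2)

lemma Gm_meas (m : ℕ) : Measurable (Gm m) := by
  have h1 := (Am_cont m).measurable
  have h2 := (Bm_cont m).measurable
  have h3 := C_meas m
  unfold Gm; fun_prop

lemma Gm_nonneg (m : ℕ) (p : ℝ × ℝ) : 0 ≤ Gm m p := by
  have := C_nonneg m p.1; have := C_nonneg m p.2
  unfold Gm; positivity

lemma Gm_le {m : ℕ} {p : ℝ × ℝ} (hp : p ∈ D) : Gm m p ≤ G p := by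
  by_cases hL : p.2 < Lm m
  swap
  · have : Gm m p = 0 := by unfold Gm; rw [C_of_ge (not_lt.1 hL)]; simp
    rw [this]; exact G_nonneg p
  obtain ⟨k, h⟩ := p
  obtain ⟨h0, h1⟩ := hp
  simp only at h0 h1 hL
  have ck := C_pos h0 (h1.trans_lt hL)
  have ch := C_pos (h0.trans h1) hL
  have gk := g_pos k
  have gh := g_pos h
  have hA : (Am m k)^2 ≤ (A k)^2 := pow_le_pow_left₀ (Am_nonneg h0) (Am_le h0) 2
  have hB : (Bm m h)^2 ≤ (C m h / g h * B h)^2 :=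
    pow_le_pow_left₀ (Bm_nonneg m h) (Bm_le (h0.trans h1)) 2
  have hr : C m h / C m k ≤ g h / g k := by
    have := C_mono (m := m) h0 h1
    rw [div_le_div_iff₀ gh gk] at this
    rw [div_le_div_iff₀ ck gk]
    linarith
  calc Gm m (k, h) = (Am m k)^2 / C m k * ((Bm m h)^2 / C m h) := rfl
    _ ≤ (A k)^2 / C m k * ((C m h / g h * B h)^2 / C m h) := by gcongr
    _ = (A k)^2 * (B h)^2 / (g h)^2 * (C m h / C m k) := by field_simp
    _ ≤ (A k)^2 * (B h)^2 / (g h)^2 * (g h / g k) := by gcongr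
    _ = (A k)^2 / g k * ((B h)^2 / g h) := by field_simp
    _ = G (k, h) := rfl

lemma Gm_int (m : ℕ) : IntegrableOn (Gm m) D := by
  refine Integrable.mono' G_int (Gm_meas m).aestronglyMeasurable ?_
  filter_upwards [ae_restrict_mem D_meas] with p hp
  rw [Real.norm_of_nonneg (Gm_nonneg m p)]
  exact Gm_le hp

lemma Gm_lim : Tendsto (fun m => ∫ p in D, Gm m p) atTop (nhds (∫ p in D, G p)) := by
  apply tendsto_integral_of_dominated_convergence G
  · exact fun m => (Gm_meas m).aestronglyMeasurable
  · exact G_int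
  · intro m
    filter_upwards [ae_restrict_mem D_meas] with p hp
    rw [Real.norm_of_nonneg (Gm_nonneg m p)]
    exact Gm_le hp
  · filter_upwards [ae_restrict_mem D_meas] with p hp
    have h2 : 0 ≤ p.2 := hp.1.trans hp.2
    exact (((Am_lim hp.1).pow 2).div (C_lim hp.1) (g_pos _).ne').mul
      (((Bm_lim h2).pow 2).div (C_lim h2) (g_pos _).ne')

lemma Jdiff {m : ℕ} (hm : 0 < m) (k : ℝ) (h0 : 0 ≤ k) (h1 : k ≤ Lm m) :
    Jn (m+1) π - Jn (m+1) (π - 2/√m * k) = 2/√m * Am m k := by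
  have hs : 0 < √(m:ℝ) := Real.sqrt_pos.2 (by exact_mod_cast hm)
  have hc : (2/√(m:ℝ)) ≠ 0 := by positivity
  have hi : ∀ a b, IntervalIntegrable (fun s => Real.sin (s/2) ^ (m + 1 - 1)) volume a b :=
    fun a b => (by fun_prop : Continuous _).intervalIntegrable a b
  unfold Jn
  rw [intervalIntegral.integral_interval_sub_left (hi _ _) (hi _ _)]
  have := intervalIntegral.integral_comp_sub_mul (a := 0) (b := k)
    (fun s => Real.sin (s/2) ^ (m + 1 - 1)) hc π
  rw [mul_zero, sub_zero, smul_eq_mul, eq_inv_mul_iff_mul_eq₀ hc] at this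
  rw [← this]
  congr 1
  unfold Am
  apply intervalIntegral.integral_congr_ae
  have hne : ∀ᵐ x : ℝ, x ≠ Lm m := by simp [ae_iff]
  filter_upwards [hne] with x hx hxm
  rw [uIoc_of_le h0] at hxm
  rw [C_of_mem hxm.1.le (lt_of_le_of_ne (hxm.2.trans h1) hx), Nat.add_sub_cancel]
  congr 1
  rw [← Real.cos_pi_div_two_sub]
  congr 1
  field_simp; ring

lemma sin_eq {m : ℕ} (hm : 0 < m) (k : ℝ) (h0 : 0 ≤ k) (h1 : k < Lm m) :
    Real.sin ((π - 2/√m * k)/2) ^ (m + 1 - 1) = C m k := by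
  rw [C_of_mem h0 h1, Nat.add_sub_cancel]
  congr 1
  rw [← Real.cos_pi_div_two_sub]
  congr 1
  field_simp; ring

lemma Lm_eq {m : ℕ} (hm : 0 < m) : π - 2/√m * Lm m = 0 := by
  have hs : 0 < √(m:ℝ) := Real.sqrt_pos.2 (by exact_mod_cast hm)
  unfold Lm; field_simp; ring

lemma Lm_nonneg (m : ℕ) : 0 ≤ Lm m := by unfold Lm; positivity

lemma Bm_Lm (m : ℕ) : Bm m (Lm m) = 0 := by
  unfold Bm
  exact setIntegral_eq_zero_of_forall_eq_zero fun x hx => C_of_ge (le_of_lt hx)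

lemma Jpi {m : ℕ} (hm : 0 < m) : Jn (m+1) π = 2/√m * Bm m 0 := by
  have h := Jdiff hm (Lm m) (Lm_nonneg m) le_rfl
  rw [Lm_eq hm] at h
  have h2 := Am_add_Bm m (Lm m)
  rw [Bm_Lm, add_zero] at h2
  rw [← h2, ← h]
  simp [Jn]

lemma Jval {m : ℕ} (hm : 0 < m) (k : ℝ) (h0 : 0 ≤ k) (h1 : k ≤ Lm m) :
    Jn (m+1) (π - 2/√m * k) = 2/√m * Bm m k := by
  have h := Jdiff hm k h0 h1
  rw [Jpi hm, ← Am_add_Bm m k] at h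
  linarith

lemma inner_eq {m : ℕ} (hm : 0 < m) (h : ℝ) (h0 : 0 ≤ h) (h1 : h ≤ Lm m) :
    ∫ s in (π - 2/√m * h)..π, (Jn (m+1) π - Jn (m+1) s)^2 / Real.sin (s/2) ^ (m + 1 - 1)
      = (2/√m)^3 * ∫ k in (0:ℝ)..h, (Am m k)^2 / C m k := by
  have hs : 0 < √(m:ℝ) := Real.sqrt_pos.2 (by exact_mod_cast hm)
  have hc : (2/√(m:ℝ)) ≠ 0 := by positivity
  have := intervalIntegral.integral_comp_sub_mul (a := 0) (b := h)
    (fun s => (Jn (m+1) π - Jn (m+1) s)^2 / Real.sin (s/2) ^ (m + 1 - 1)) hc π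
  rw [mul_zero, sub_zero, smul_eq_mul, eq_inv_mul_iff_mul_eq₀ hc] at this
  rw [← this, show (2/√(m:ℝ))^3 = (2/√m) * (2/√m)^2 by ring, mul_assoc]
  congr 1
  rw [← intervalIntegral.integral_const_mul]
  apply intervalIntegral.integral_congr_ae
  have hne : ∀ᵐ x : ℝ, x ≠ Lm m := by simp [ae_iff]
  filter_upwards [hne] with x hx hxm
  rw [uIoc_of_le h0] at hxm
  rw [Jdiff hm x hxm.1.le (hxm.2.trans h1),
    sin_eq hm x hxm.1.le (lt_of_le_of_ne (hxm.2.trans h1) hx)]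
  ring

lemma outer_eq {m : ℕ} (hm : 0 < m) :
    ∫ u in (0:ℝ)..π, ((Jn (m+1) u)^2 / Real.sin (u/2) ^ (m + 1 - 1)) *
      ∫ s in u..π, (Jn (m+1) π - Jn (m+1) s)^2 / Real.sin (s/2) ^ (m + 1 - 1)
      = (2/√m)^6 * ∫ p in D, Gm m p := by
  have hs : 0 < √(m:ℝ) := Real.sqrt_pos.2 (by exact_mod_cast hm)
  have hc : (2/√(m:ℝ)) ≠ 0 := by positivity
  have := intervalIntegral.integral_comp_sub_mul (a := 0) (b := Lm m)
    (fun u => ((Jn (m+1) u)^2 / Real.sin (u/2) ^ (m + 1 - 1)) *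
      ∫ s in u..π, (Jn (m+1) π - Jn (m+1) s)^2 / Real.sin (s/2) ^ (m + 1 - 1)) hc π
  rw [mul_zero, sub_zero, smul_eq_mul, eq_inv_mul_iff_mul_eq₀ hc, Lm_eq hm] at this
  rw [← this]
  have hf := fub2 (fun k => (Am m k)^2 / C m k) (fun x => (Bm m x)^2 / C m x) (Gm_int m)
  have hf' : ∫ p in D, Gm m p = ∫ x in (0:ℝ)..(Lm m), (Bm m x)^2 / C m x *
      ∫ k in (0:ℝ)..x, (Am m k)^2 / C m k := by
    refine hf.trans ?_
    rw [intervalIntegral.integral_of_le (Lm_nonneg m)]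
    apply setIntegral_eq_of_subset_of_forall_sdiff_eq_zero measurableSet_Ioi Ioc_subset_Ioi_self
    intro x hx
    have : Lm m ≤ x := by
      by_contra hlt
      exact hx.2 ⟨hx.1, (not_le.1 hlt).le⟩
    rw [C_of_ge this]; simp
  rw [hf', show (2/√(m:ℝ))^6 = (2/√m) * (2/√m)^5 by ring, mul_assoc]
  congr 1
  rw [← intervalIntegral.integral_const_mul]
  apply intervalIntegral.integral_congr_ae
  have hne : ∀ᵐ x : ℝ, x ≠ Lm m := by simp [ae_iff]
  filter_upwards [hne] with x hx hxm
  rw [uIoc_of_le (Lm_nonneg m)] at hxm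
  rw [inner_eq hm x hxm.1.le hxm.2, Jval hm x hxm.1.le hxm.2,
    sin_eq hm x hxm.1.le (lt_of_le_of_ne hxm.2 hx)]
  ring

lemma VRP_eq {m : ℕ} (hm : 0 < m) :
    (m:ℝ)^2 * VRP (m+1) = 32 / (Bm m 0)^2 * ∫ p in D, Gm m p := by
  unfold VRP
  rw [outer_eq hm, Jpi hm]
  have hmp : (0:ℝ) < m := by exact_mod_cast hm
  have h2 : (2/√(m:ℝ))^2 = 4 / m := by rw [div_pow, Real.sq_sqrt hmp.le]; norm_num
  rw [mul_pow, show (2/√(m:ℝ))^6 = ((2/√m)^2)^3 by ring, h2]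
  by_cases hB : Bm m 0 = 0
  · simp [hB]
  · field_simp; ring

end RPV

theorem rp_variance_asymptotics :
    IntegrableOn
        (fun p : ℝ × ℝ =>
          Real.exp (p.1^2/2) * (∫ x in (0:ℝ)..p.1, Real.exp (-x^2/2))^2 *
            (Real.exp (p.2^2/2) * (∫ h₁ in Ioi p.2, Real.exp (-h₁^2/2))^2))
        {p : ℝ × ℝ | 0 ≤ p.1 ∧ p.1 ≤ p.2} volume ∧
      Tendsto (fun n : ℕ => ((n:ℝ) - 1)^2 * VRP n) atTop (nhds (4 * NRP)) := by
  constructor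
  · have h := RPV.G_int
    have e : RPV.G = fun p : ℝ × ℝ =>
          Real.exp (p.1^2/2) * (∫ x in (0:ℝ)..p.1, Real.exp (-x^2/2))^2 *
            (Real.exp (p.2^2/2) * (∫ h₁ in Ioi p.2, Real.exp (-h₁^2/2))^2) := by
      funext p
      rw [RPV.exp_eq, RPV.exp_eq]
      unfold RPV.G
      rw [div_eq_inv_mul, div_eq_inv_mul]
      rfl
    rw [e] at h
    exact h
  · rw [← tendsto_add_atTop_iff_nat 1]
    have hB : RPV.B 0 ^ 2 = π / 2 := by
      rw [RPV.B_zero, div_pow, Real.sq_sqrt (by positivity)]; ring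
    have hB0 : RPV.B 0 ^ 2 ≠ 0 := by rw [hB]; positivity
    have hl : Tendsto (fun m : ℕ => 32 / (RPV.Bm m 0)^2 * ∫ p in RPV.D, RPV.Gm m p) atTop
        (nhds (32 / (RPV.B 0)^2 * ∫ p in RPV.D, RPV.G p)) :=
      (tendsto_const_nhds.div ((RPV.Bm_lim le_rfl).pow 2) hB0).mul RPV.Gm_lim
    have e : 4 * NRP = 32 / (RPV.B 0)^2 * ∫ p in RPV.D, RPV.G p := by
      rw [RPV.NRP_eq, hB]; field_simp; ring
    rw [e]
    refine hl.congr' ?_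
    filter_upwards [eventually_gt_atTop 0] with m hm
    rw [← RPV.VRP_eq hm]
    push_cast
    ring
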